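/- Let $f : \mathbb{R}^{n_x} \times \mathbb{R}^{n_u} \to \mathbb{R}^{n_x}$ and let $\gamma^x \in \mathbb{R}^{n_x \times n_x}$, $\gamma^u \in \mathbb{R}^{n_u \times n_u}$ satisfy $f(\gamma^x x, \gamma^u u) = \gamma^x f(x,u)$ for all $x, u$. Let $A \in \mathbb{R}^{n_z \times n_z}$, $B \in \mathbb{R}^{n_z \times n_u}$, $C \in \mathbb{R}^{n_x \times n_z}$ and let $G_z \in \mathbb{R}^{n_z \times n_z}$, $G_v \in \mathbb{R}^{n_u \times n_u}$ satisfy $A G_z = G_z A$, $B G_v = G_z B$, and $C G_z = \gamma^x C$. Let $\Phi : \mathbb{R}^{n_x} \to \mathbb{R}^{n_z}$ and $\Psi : \mathbb{R}^{n_u} \to \mathbb{R}^{n_u}$ be maps satisfying the equivariance relations $\Phi(\gamma^x x) = G_z \Phi(x)$ for all $x$ and $\Psi(\gamma^u u) = G_v \Psi(u)$ for all $u$. Fix an initial state $x_0$ and an input sequence $(u_t)_{t\ge 0}$, and define the lifted trajectories $z_{t+1} = A z_t + B \Psi(u_t)$ with $z_0 = \Phi(x_0)$, and $z'_{t+1}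 = A z'_t + B \Psi(\gamma^u u_t)$ with $z'_0 = \Phi(\gamma^x x_0)$, together with the predictions $\hat{x}_t = C z_t$ and $\widehat{\gamma^x x}_t = C z'_t$. Then $\widehat{\gamma^x x}_t = \gamma^x \hat{x}_t$ for all $t \ge 0$. -/

import Mathlib

/-!
The image of a lifted trajectory under the lifted symmetry is again a trajectory of the predictor,
driven by the transformed inputs. By equivariance of the lifting functions it has the initial state
and the inputs of the lifted symmetrized trajectory, so the two coincide; the output map then
carries the lifted symmetry to the original one.
-/

open Function

section ControlledSystem

variable {X U : Type*} {f : X → U → X} {γx : X → X} {γu : U → U} {u : ℕ → U} {x y : ℕ → X}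

/-- The controlled system `x (t + 1) = f (x t) (u t)` has a symmetry with respect to `(γx, γu)`;
the actions are encoded as self-maps, so that the definition also applies to lifted predictors. -/
def HasSymmetry (f : X → U → X) (γx : X → X) (γu : U → U) : Prop :=
  ∀ x u, f (γx x) (γu u) = γx (f x u)

/-- The state sequence `x` is a trajectory of the controlled system `f` under the inputs `u`. The
initial state `x 0` is left free. -/
def IsTrajectory (f : X → U → X) (u : ℕ → U) (x : ℕ → X) : Prop :=
  ∀ t, x (t + 1) = f (x t) (u t)

theorem HasSymmetry.isTrajectory_comp (hf : HasSymmetry f γx γu) (hx : IsTrajectory f u x) :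
    IsTrajectory f (γu ∘ u) (γx ∘ x) := fun t ↦
  calc
    γx (x (t + 1)) = γx (f (x t) (u t)) := congrArg γx (hx t)
    _ = f (γx (x t)) (γu (u t)) := (hf _ _).symm

theorem IsTrajectory.eq_of_zero_eq (hx : IsTrajectory f u x) (hy : IsTrajectory f u y)
    (h0 : x 0 = y 0) : x = y := by
  funext t
  induction t with
  | zero => exact h0
  | succ t ih => rw [hx, hy, ih]

end ControlledSystem

section LiftedPrediction

variable {X U Z V : Type*} {F : Z → V → Z} {C : Z → X} {Φ : X → Z} {Ψ : U → V}
  {γx : X → X} {γu : U → U} {Gz : Z → Z} {Gv : V → V} {x0 : X} {u : ℕ → U} {z z' : ℕ → Z}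

theorem HasSymmetry.lifted_trajectory_eq (hF : HasSymmetry F Gz Gv)
    (hΦ : Semiconj Φ γx Gz) (hΨ : Semiconj Ψ γu Gv)
    (hz : IsTrajectory F (Ψ ∘ u) z) (hz0 : z 0 = Φ x0)
    (hz' : IsTrajectory F (Ψ ∘ γu ∘ u) z') (hz'0 : z' 0 = Φ (γx x0)) :
    z' = Gz ∘ z := by
  have inputs_eq : Ψ ∘ γu ∘ u = Gv ∘ Ψ ∘ u := funext fun t ↦ hΨ (u t)
  have initial_eq : z' 0 = (Gz ∘ z) 0 := by rw [hz'0, hΦ.eq, comp_apply, hz0]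
  rw [inputs_eq] at hz'
  exact hz'.eq_of_zero_eq (hF.isTrajectory_comp hz) initial_eq

theorem symmetrized_prediction_general (hF : HasSymmetry F Gz Gv) (hC : Semiconj C Gz γx)
    (hΦ : Semiconj Φ γx Gz) (hΨ : Semiconj Ψ γu Gv)
    (hz : IsTrajectory F (Ψ ∘ u) z) (hz0 : z 0 = Φ x0)
    (hz' : IsTrajectory F (Ψ ∘ γu ∘ u) z') (hz'0 : z' 0 = Φ (γx x0)) (t : ℕ) :
    C (z' t) = γx (C (z t)) := by
  rw [hF.lifted_trajectory_eq hΦ hΨ hz hz0 hz' hz'0]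
  exact hC (z t)

end LiftedPrediction

section LinearPredictor

open Matrix

variable {m n R : Type*} [Fintype m] [Fintype n] [NonUnitalSemiring R]

theorem semiconj_mulVec {M : Matrix m n R} {G : Matrix n n R} {H : Matrix m m R}
    (h : M * G = H * M) : Semiconj M.mulVec G.mulVec H.mulVec := fun v ↦ by
  rw [mulVec_mulVec, mulVec_mulVec, h]

theorem hasSymmetry_mulVec_add_mulVec {A Gz : Matrix m m R} {B : Matrix m n R} {Gv : Matrix n n R}
    (hA : A * Gz = Gz * A) (hB : B * Gv = Gz * B) :
    HasSymmetry (fun z v ↦ A.mulVec z + B.mulVec v) Gz.mulVec Gv.mulVec := fun z v ↦ by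
  beta_reduce
  rw [(semiconj_mulVec hA).eq, (semiconj_mulVec hB).eq, mulVec_add]

end LinearPredictor

/-- For a system with symmetry `(γx, γu)` and a symmetry-respecting Koopman predictor
`(A, B, C)` with lifted actions `(Gz, Gv)` and equivariant lifting functions `Φ, Ψ`,
the prediction of the symmetrized trajectory is the symmetrized prediction. -/
theorem symmetrized_prediction (nx nu nz : ℕ)
    (f : (Fin nx → ℝ) → (Fin nu → ℝ) → (Fin nx → ℝ))
    (γx : Matrix (Fin nx) (Fin nx) ℝ) (γu : Matrix (Fin nu) (Fin nu) ℝ)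
    (hsym : ∀ x u, f (γx.mulVec x) (γu.mulVec u) = γx.mulVec (f x u))
    (A : Matrix (Fin nz) (Fin nz) ℝ) (B : Matrix (Fin nz) (Fin nu) ℝ)
    (C : Matrix (Fin nx) (Fin nz) ℝ)
    (Gz : Matrix (Fin nz) (Fin nz) ℝ) (Gv : Matrix (Fin nu) (Fin nu) ℝ)
    (hA : A * Gz = Gz * A) (hB : B * Gv = Gz * B) (hC : C * Gz = γx * C)
    (Φ : (Fin nx → ℝ) → (Fin nz → ℝ)) (Ψ : (Fin nu → ℝ) → (Fin nu → ℝ))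
    (hΦ : ∀ x, Φ (γx.mulVec x) = Gz.mulVec (Φ x))
    (hΨ : ∀ u, Ψ (γu.mulVec u) = Gv.mulVec (Ψ u))
    (x0 : Fin nx → ℝ) (u : ℕ → Fin nu → ℝ)
    (z z' : ℕ → Fin nz → ℝ)
    (hz : ∀ t, z (t + 1) = A.mulVec (z t) + B.mulVec (Ψ (u t)))
    (hz0 : z 0 = Φ x0)
    (hz' : ∀ t, z' (t + 1) = A.mulVec (z' t) + B.mulVec (Ψ (γu.mulVec (u t))))
    (hz'0 : z' 0 = Φ (γx.mulVec x0)) :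
    ∀ t, C.mulVec (z' t) = γx.mulVec (C.mulVec (z t)) :=
  symmetrized_prediction_general (hasSymmetry_mulVec_add_mulVec hA hB) (semiconj_mulVec hC)
    hΦ hΨ hz hz0 hz' hz'0
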